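/- arXiv:2104.14001 — 2 statements merged into one kernel-verified Lean document; each statement's English description precedes it below -/
import Mathlib

section
/- Let b, f_1,…,f_n, and g_{j,i} (1 ≤ j ≤ n, 1 ≤ i ≤ m) be real polynomials in n variables, and define p_b := Σ_{j=1}^n (∂b/∂x_j)·f_j and q_{b,i} := Σ_{j=1}^n (∂b/∂x_j)·g_{j,i}. Suppose there exist polynomials η, θ_1,…,θ_m, sum-of-squares polynomials α_0, α_1, and a positive integer r such that the polynomial identity η·b + Σ_{i=1}^m θ_i·q_{b,i} + α_0 − α_1·p_b + p_b^{2r} = 0 holds. Then there is no x ∈ ℝ^n satisfying b(x) = 0, q_{b,i}(x) = 0 for all i = 1,…,m, and p_b(x) < 0; consequently, for every x ∈ ℝ^n with b(x) = 0 there exists u ∈ ℝ^m such that p_b(x) + Σ_{i=1}^m q_{b,i}(x)·u_i ≥ 0. -/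
open MvPolynomial

/-- A multivariate real polynomial is a sum of squares. -/
def IsSOS {n : ℕ} (p : MvPolynomial (Fin n) ℝ) : Prop :=
  ∃ (k : ℕ) (g : Fin k → MvPolynomial (Fin n) ℝ), p = ∑ i, (g i) ^ 2

theorem isSumSq_map {A B : Type*} [NonUnitalNonAssocSemiring A] [NonUnitalNonAssocSemiring B]
    (φ : A →ₙ+* B) {a : A} (ha : IsSumSq a) : IsSumSq (φ a) := by
  induction ha with
  | zero => rw [map_zero]; exact .zero
  | sq_add c _ ih => rw [map_add, map_mul]; exact .sq_add (φ c) ih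

theorem IsSOS.isSumSq {n : ℕ} {p : MvPolynomial (Fin n) ℝ} (hp : IsSOS p) : IsSumSq p := by
  obtain ⟨k, g, rfl⟩ := hp
  exact .sum_sq Finset.univ g

theorem mkDerivation_eq_sum_pderiv_smul {σ R M : Type*} [Fintype σ] [CommSemiring R]
    [AddCommMonoid M] [Module R M] [Module (MvPolynomial σ R) M]
    [IsScalarTower R (MvPolynomial σ R) M] (f : σ → M) (p : MvPolynomial σ R) :
    mkDerivation R f p = ∑ j, pderiv j p • f j := by
  classical
  let D : Derivation R (MvPolynomial σ R) M :=
    ∑ j, (LinearMap.toSpanSingleton (MvPolynomial σ R) M (f j)).compDer (pderiv j)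
  have hD (s : MvPolynomial σ R) : D s = ∑ j, pderiv j s • f j := by
    simp only [D, ← Derivation.coeFnAddMonoidHom_apply, map_sum, Finset.sum_apply]
    simp
  have hX (i : σ) : mkDerivation R f (X i) = D (X i) := by
    simp [hD, pderiv_X, Pi.single_apply, ite_smul]
  rw [derivation_ext hX, hD]

theorem nonneg_of_add_sub_mul_add_even_pow_eq_zero {R : Type*} [Ring R] [LinearOrder R]
    [IsStrictOrderedRing R] {a₀ a₁ c : R} {r : ℕ} (ha₀ : 0 ≤ a₀) (ha₁ : 0 ≤ a₁)
    (h : a₀ - a₁ * c + c ^ (2 * r) = 0) : 0 ≤ c := by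
  by_contra! hc
  have hmul : a₁ * c ≤ 0 := mul_nonpos_of_nonneg_of_nonpos ha₁ hc.le
  have hpow : 0 < c ^ (2 * r) := (even_two_mul r).pow_pos hc.ne
  exact (add_pos_of_nonneg_of_pos (sub_nonneg.mpr (hmul.trans ha₀)) hpow).ne' h

theorem map_nonneg_of_sos_certificate {A R ι : Type*} [CommRing A] [Ring R] [LinearOrder R]
    [IsStrictOrderedRing R] [Fintype ι] (φ : A →+* R) {b p η α₀ α₁ : A} {q θ : ι → A} {r : ℕ}
    (hα₀ : IsSumSq α₀) (hα₁ : IsSumSq α₁)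
    (hid : η * b + ∑ i, θ i * q i + α₀ - α₁ * p + p ^ (2 * r) = 0)
    (hb : φ b = 0) (hq : ∀ i, φ (q i) = 0) : 0 ≤ φ p := by
  have hφ : φ α₀ - φ α₁ * φ p + φ p ^ (2 * r) = 0 := by
    simpa [hb, hq] using congrArg φ hid
  exact nonneg_of_add_sub_mul_add_even_pow_eq_zero
    (isSumSq_map (φ : A →ₙ+* R) hα₀).nonneg (isSumSq_map (φ : A →ₙ+* R) hα₁).nonneg hφ

theorem exists_nonneg_add_sum_mul_iff {K ι : Type*} [DivisionRing K] [Preorder K]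
    [Fintype ι] {a : K} {c : ι → K} :
    (∃ u : ι → K, 0 ≤ a + ∑ i, c i * u i) ↔ ((∀ i, c i = 0) → 0 ≤ a) := by
  classical
  refine ⟨fun ⟨u, hu⟩ hc ↦ by simpa [hc] using hu, fun h ↦ ?_⟩
  by_cases hc : ∀ i, c i = 0
  · exact ⟨0, by simpa using h hc⟩
  · obtain ⟨i, hi⟩ := not_forall.mp hc
    let u : ι → K := Pi.single i ((c i)⁻¹ * -a)
    have hu : ∑ j, c j * u j = -a :=
      (dotProduct_single c _ i).trans (mul_inv_cancel_left₀ hi _)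
    exact ⟨u, by rw [hu, add_neg_cancel]⟩

/-- A polynomial vector field `f` acts as the derivation `mkDerivation K f`, so that the Lie
derivative of `b` makes sense in infinitely many variables too. -/
theorem cbf_sos_certificate_sound_general {K σ ι : Type*} [Field K] [LinearOrder K]
    [IsStrictOrderedRing K] [Fintype ι] (b : MvPolynomial σ K) (f : σ → MvPolynomial σ K)
    (g : σ → ι → MvPolynomial σ K) {η α₀ α₁ : MvPolynomial σ K} {θ : ι → MvPolynomial σ K}
    {r : ℕ} (hα₀ : IsSumSq α₀) (hα₁ : IsSumSq α₁)
    (hid : η * b + ∑ i, θ i * mkDerivation K (g · i) b + α₀ - α₁ * mkDerivation K f b +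
      mkDerivation K f b ^ (2 * r) = 0) :
    (¬ ∃ x : σ → K, eval x b = 0 ∧ (∀ i, eval x (mkDerivation K (g · i) b) = 0) ∧
        eval x (mkDerivation K f b) < 0) ∧
      (∀ x : σ → K, eval x b = 0 → ∃ u : ι → K,
        0 ≤ eval x (mkDerivation K f b) + ∑ i, eval x (mkDerivation K (g · i) b) * u i) := by
  have drift_nonneg (x : σ → K) (hb : eval x b = 0)
      (hq : ∀ i, eval x (mkDerivation K (g · i) b) = 0) : 0 ≤ eval x (mkDerivation K f b) :=
    map_nonneg_of_sos_certificate (eval x) hα₀ hα₁ hid hb hq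
  exact ⟨fun ⟨x, hb, hq, hlt⟩ ↦ (drift_nonneg x hb hq).not_gt hlt,
    fun x hb ↦ exists_nonneg_add_sum_mul_iff.mpr (drift_nonneg x hb)⟩

/-- Theorem 3, soundness direction of the SOS certificate (2) for CBF verification. -/
theorem cbf_sos_certificate_sound
    (n m : ℕ)
    (b : MvPolynomial (Fin n) ℝ)
    (f : Fin n → MvPolynomial (Fin n) ℝ)
    (g : Fin n → Fin m → MvPolynomial (Fin n) ℝ)
    (p : MvPolynomial (Fin n) ℝ)
    (hp : p = ∑ j, pderiv j b * f j)
    (q : Fin m → MvPolynomial (Fin n) ℝ)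
    (hq : ∀ i, q i = ∑ j, pderiv j b * g j i)
    (η : MvPolynomial (Fin n) ℝ)
    (θ : Fin m → MvPolynomial (Fin n) ℝ)
    (α₀ α₁ : MvPolynomial (Fin n) ℝ) (hα₀ : IsSOS α₀) (hα₁ : IsSOS α₁)
    (r : ℕ) (hr : 0 < r)
    (hid : η * b + ∑ i, θ i * q i + α₀ - α₁ * p + p ^ (2 * r) = 0) :
    (¬ ∃ x : Fin n → ℝ, eval x b = 0 ∧ (∀ i, eval x (q i) = 0) ∧ eval x p < 0) ∧
      (∀ x : Fin n → ℝ, eval x b = 0 →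
        ∃ u : Fin m → ℝ, 0 ≤ eval x p + ∑ i, eval x (q i) * u i) := by
  obtain rfl : p = mkDerivation ℝ f b := by
    simp only [hp, mkDerivation_eq_sum_pderiv_smul, smul_eq_mul]
  obtain rfl : q = fun i ↦ mkDerivation ℝ (g · i) b := by
    simp only [funext hq, mkDerivation_eq_sum_pderiv_smul, smul_eq_mul]
  exact cbf_sos_certificate_sound_general b f g hα₀.isSumSq hα₁.isSumSq hid
end

section
/- Let b, f_1,…,f_n, and g_{j,i} (1 ≤ j ≤ n, 1 ≤ i ≤ m) be real polynomials in n variables, and define p_b := Σ_{j=1}^n (∂b/∂x_j)·f_j and q_{b,i} := Σ_{j=1}^n (∂b/∂x_j)·g_{j,i}. Suppose there exist polynomials η, θ_1,…,θ_m, sum-of-squares polynomials α and Λ, and a real number ρ ≤ 0 such that the polynomial α·p_b + Σ_{i=1}^m θ_i·q_{b,i} + η·b + ρ·Λ − 1 is a sum of squares. Then there is no x ∈ ℝ^n satisfying b(x) = 0, q_{b,i}(x) = 0 for all i = 1,…,m, and p_b(x) ≤ 0; consequently, for every x with b(x) = 0 there exists u ∈ ℝ^m with p_b(x) + Σ_{i=1}^m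 q_{b,i}(x)·u_i ≥ 0. -/
open MvPolynomial

theorem IsSOS.eval_nonneg {n : ℕ} {p : MvPolynomial (Fin n) ℝ} (hp : IsSOS p) (x : Fin n → ℝ) :
    0 ≤ eval x p := by
  obtain ⟨k, g, rfl⟩ := hp
  simp only [map_sum, map_pow]
  exact Finset.sum_nonneg fun i _ ↦ sq_nonneg (eval x (g i))

section Certificate

variable {n : ℕ} {ι : Type*} [Fintype ι] {b p η α Λ : MvPolynomial (Fin n) ℝ}
  {q θ : ι → MvPolynomial (Fin n) ℝ} {ρ : ℝ} {x : Fin n → ℝ}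

theorem one_le_eval_mul_eval_of_isSOS_certificate (hΛ : IsSOS Λ) (hρ : ρ ≤ 0)
    (hcert : IsSOS (α * p + ∑ i, θ i * q i + η * b + C ρ * Λ - 1))
    (hb : eval x b = 0) (hq : ∀ i, eval x (q i) = 0) : 1 ≤ eval x α * eval x p := by
  have eval_cert : 0 ≤ eval x α * eval x p + ρ * eval x Λ - 1 := by
    simpa [hb, hq] using hcert.eval_nonneg x
  have slack_nonpos : ρ * eval x Λ ≤ 0 :=
    mul_nonpos_of_nonpos_of_nonneg hρ (hΛ.eval_nonneg x)
  linarith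

theorem eval_pos_of_isSOS_certificate (hα : IsSOS α) (hΛ : IsSOS Λ) (hρ : ρ ≤ 0)
    (hcert : IsSOS (α * p + ∑ i, θ i * q i + η * b + C ρ * Λ - 1))
    (hb : eval x b = 0) (hq : ∀ i, eval x (q i) = 0) : 0 < eval x p :=
  pos_of_mul_pos_right
    (one_pos.trans_le (one_le_eval_mul_eval_of_isSOS_certificate hΛ hρ hcert hb hq))
    (hα.eval_nonneg x)

end Certificate

theorem exists_dotProduct_eq_of_ne_zero {ι K : Type*} [Fintype ι] [DivisionRing K]
    {v : ι → K} (hv : v ≠ 0) (c : K) : ∃ u : ι → K, v ⬝ᵥ u = c := by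
  classical
  obtain ⟨i, hi⟩ := Function.ne_iff.mp hv
  exact ⟨Pi.single i ((v i)⁻¹ * c), by rw [dotProduct_single, mul_inv_cancel_left₀ hi]⟩

theorem exists_nonneg_add_dotProduct_iff {ι K : Type*} [Fintype ι] [DivisionRing K] [Preorder K]
    {v : ι → K} {c : K} : (∃ u : ι → K, 0 ≤ c + v ⬝ᵥ u) ↔ (v = 0 → 0 ≤ c) := by
  constructor
  · rintro ⟨u, hu⟩ rfl
    simpa using hu
  · intro hc
    by_cases hv : v = 0
    · exact ⟨0, by simpa using hc hv⟩
    · obtain ⟨u, hu⟩ := exists_dotProduct_eq_of_ne_zero hv (-c)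
      exact ⟨u, by rw [hu, add_neg_cancel]⟩

/-- Theorem 6: the first SOS constraint of program (9) with `ρ ≤ 0` certifies
CBF feasibility. -/
theorem synthesis_first_constraint_gives_cbf
    (n m : ℕ)
    (b : MvPolynomial (Fin n) ℝ)
    (f : Fin n → MvPolynomial (Fin n) ℝ)
    (g : Fin n → Fin m → MvPolynomial (Fin n) ℝ)
    (p : MvPolynomial (Fin n) ℝ)
    (hp : p = ∑ j, pderiv j b * f j)
    (q : Fin m → MvPolynomial (Fin n) ℝ)
    (hq : ∀ i, q i = ∑ j, pderiv j b * g j i)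
    (η : MvPolynomial (Fin n) ℝ)
    (θ : Fin m → MvPolynomial (Fin n) ℝ)
    (α Λ : MvPolynomial (Fin n) ℝ) (hα : IsSOS α) (hΛ : IsSOS Λ)
    (ρ : ℝ) (hρ : ρ ≤ 0)
    (hcert : IsSOS (α * p + ∑ i, θ i * q i + η * b + C ρ * Λ - 1)) :
    (¬ ∃ x : Fin n → ℝ,
        eval x b = 0 ∧ (∀ i, eval x (q i) = 0) ∧ eval x p ≤ 0) ∧
      (∀ x : Fin n → ℝ, eval x b = 0 →
        ∃ u : Fin m → ℝ, 0 ≤ eval x p + ∑ i, eval x (q i) * u i) := by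
  have drift_pos (x : Fin n → ℝ) (hb : eval x b = 0) (hq₀ : ∀ i, eval x (q i) = 0) :
      0 < eval x p :=
    eval_pos_of_isSOS_certificate hα hΛ hρ hcert hb hq₀
  constructor
  · rintro ⟨x, hb, hq₀, hp₀⟩
    exact hp₀.not_gt (drift_pos x hb hq₀)
  · intro x hb
    exact exists_nonneg_add_dotProduct_iff.mpr fun hq₀ ↦ (drift_pos x hb (congrFun hq₀)).le
end
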